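/- arXiv:1208.4936 — 2 statements merged into one kernel-verified Lean document; each statement's English description precedes it below -/
import Mathlib

section
/- Let 1 < p < ∞, n,m ∈ ℕ, and let T be a trigonometric polynomial of degree (n,m) in two variables. Then K_p(T) ≤ 12π²·p·p'·(nm)^{1/p}·‖T‖_p and I_p(T) ≤ 8π²·(p·p')²·(nm)^{1/p}·‖T‖_p, where p' = p/(p−1). -/
open MeasureTheory Filter Set
open scoped ENNReal

noncomputable section

/-- A function of two real variables that is 1-periodic in each variable. -/
def BiPeriodic (f : ℝ → ℝ → ℝ) : Prop :=
  (∀ x y, f (x + 1) y = f x y) ∧ (∀ x y, f x (y + 1) = f x y)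

/-- A 1-periodic function of one real variable. -/
def Periodic1 (g : ℝ → ℝ) : Prop := ∀ x, g (x + 1) = g x

/-- The `L^p` norm of a function over `[0,1]^2` (as a value in `[0,∞]`). -/
noncomputable def lpNorm2 (p : ℝ) (f : ℝ → ℝ → ℝ) : ℝ≥0∞ :=
  (∫⁻ x in Set.Icc (0:ℝ) 1, ∫⁻ y in Set.Icc (0:ℝ) 1,
      ENNReal.ofReal (|f x y| ^ p)) ^ (1 / p)

/-- The `L^p` norm of a function over `[0,1]` (as a value in `[0,∞]`). -/
noncomputable def lpNorm1 (p : ℝ) (g : ℝ → ℝ) : ℝ≥0∞ :=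
  (∫⁻ x in Set.Icc (0:ℝ) 1, ENNReal.ofReal (|g x| ^ p)) ^ (1 / p)

/-- Membership in `L^p([0,1]^2)`: measurable, 1-periodic in each variable,
finite `L^p` norm. -/
def MemLp2 (p : ℝ) (f : ℝ → ℝ → ℝ) : Prop :=
  Measurable (Function.uncurry f) ∧ BiPeriodic f ∧ lpNorm2 p f < ⊤

/-- Membership in `L^p([0,1])` for 1-periodic functions of one variable. -/
def MemLp1 (p : ℝ) (g : ℝ → ℝ) : Prop :=
  Measurable g ∧ Periodic1 g ∧ lpNorm1 p g < ⊤

/-- The (total) `L^p` modulus of continuity `ω(f;δ)_p` of a bivariate function. -/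
noncomputable def modulus2 (p : ℝ) (f : ℝ → ℝ → ℝ) (δ : ℝ) : ℝ≥0∞ :=
  ⨆ (h : ℝ × ℝ) (_ : Real.sqrt (h.1 ^ 2 + h.2 ^ 2) ≤ δ),
    lpNorm2 p (fun x y => f (x + h.1) (y + h.2) - f x y)

/-- The `L^p` modulus of continuity `ω(g;δ)_p` of a univariate function. -/
noncomputable def modulus1 (p : ℝ) (g : ℝ → ℝ) (δ : ℝ) : ℝ≥0∞ :=
  ⨆ (h : ℝ) (_ : h ∈ Set.Icc 0 δ), lpNorm1 p (fun x => g (x + h) - g x)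

/-- The mixed `L^p` modulus of continuity `ω(f;u,v)_p`. -/
noncomputable def mixedModulus (p : ℝ) (f : ℝ → ℝ → ℝ) (u v : ℝ) : ℝ≥0∞ :=
  ⨆ (s : ℝ) (_ : s ∈ Set.Icc 0 u) (t : ℝ) (_ : t ∈ Set.Icc 0 v),
    lpNorm2 p (fun x y => f (x + s) (y + t) - f (x + s) y - f x (y + t) + f x y)

/-- `J_p(f) = ∫₀¹ t^{-1/p} ω(f;t)_p dt/t`. -/
noncomputable def Jp (p : ℝ) (f : ℝ → ℝ → ℝ) : ℝ≥0∞ :=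
  ∫⁻ t in Set.Ioc (0:ℝ) 1, ENNReal.ofReal (t ^ (-(1/p)) / t) * modulus2 p f t

/-- `K_p(f) = ∫₀¹ t^{-1/p} [ω(f;t,1)_p + ω(f;1,t)_p] dt/t`. -/
noncomputable def Kp (p : ℝ) (f : ℝ → ℝ → ℝ) : ℝ≥0∞ :=
  ∫⁻ t in Set.Ioc (0:ℝ) 1,
    ENNReal.ofReal (t ^ (-(1/p)) / t) * (mixedModulus p f t 1 + mixedModulus p f 1 t)

/-- `I_p(f) = ∫₀¹∫₀¹ (uv)^{-1/p} ω(f;u,v)_p (du/u)(dv/v)`. -/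
noncomputable def Ip (p : ℝ) (f : ℝ → ℝ → ℝ) : ℝ≥0∞ :=
  ∫⁻ u in Set.Ioc (0:ℝ) 1, ∫⁻ v in Set.Ioc (0:ℝ) 1,
    ENNReal.ofReal ((u * v) ^ (-(1/p)) / (u * v)) * mixedModulus p f u v

/-- The essential supremum norm of `f` over `[0,1]^2`. -/
noncomputable def supNorm2 (f : ℝ → ℝ → ℝ) : ℝ≥0∞ :=
  essSup (fun z : ℝ × ℝ => ENNReal.ofReal |f z.1 z.2|)
    (volume.restrict ((Set.Icc (0:ℝ) 1) ×ˢ (Set.Icc (0:ℝ) 1)))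

/-- The Wiener `p`-variation of a 1-periodic function `g`, as a value in `[0,∞]`:
the supremum over partitions `x₀ < x₁ < ... < xₙ = x₀ + 1` of
`(∑ |g(x_{k+1}) - g(x_k)|^p)^{1/p}`. -/
noncomputable def vp (p : ℝ) (g : ℝ → ℝ) : ℝ≥0∞ :=
  ⨆ (n : ℕ) (x : ℕ → ℝ) (_ : ∀ i < n, x i < x (i + 1)) (_ : x n = x 0 + 1),
    ENNReal.ofReal ((∑ k ∈ Finset.range n, |g (x (k + 1)) - g (x k)| ^ p) ^ (1 / p))

/-- The Hardy–Vitali type total `p`-variation of a bivariate function,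
as a value in `[0,∞]`: the supremum over nets of
`(∑∑ |Δf(x_i,y_j)|^p)^{1/p}`. -/
noncomputable def vp2 (p : ℝ) (f : ℝ → ℝ → ℝ) : ℝ≥0∞ :=
  ⨆ (m : ℕ) (n : ℕ) (x : ℕ → ℝ) (y : ℕ → ℝ)
    (_ : ∀ i < m, x i < x (i + 1)) (_ : x m = x 0 + 1)
    (_ : ∀ j < n, y j < y (j + 1)) (_ : y n = y 0 + 1),
    ENNReal.ofReal ((∑ i ∈ Finset.range m, ∑ j ∈ Finset.range n,
      |f (x (i + 1)) (y (j + 1)) - f (x (i + 1)) (y j)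
        - f (x i) (y (j + 1)) + f (x i) (y j)| ^ p) ^ (1 / p))

/-- Membership in the Hardy class `H_p^{(2)}`: finite Vitali `p`-variation and
all linear sections of bounded `p`-variation. -/
def MemHp2 (p : ℝ) (f : ℝ → ℝ → ℝ) : Prop :=
  vp2 p f < ⊤ ∧ (∀ x, vp p (fun y => f x y) < ⊤) ∧ (∀ y, vp p (fun x => f x y) < ⊤)

/-- Membership in the mixed norm class `V_p[V_p]`: all sections have bounded
`p`-variation and the functions `x ↦ v_p(f_x)`, `y ↦ v_p(f_y)` are themselves
of bounded `p`-variation. -/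
def MemVpVp (p : ℝ) (f : ℝ → ℝ → ℝ) : Prop :=
  (∀ x, vp p (fun y => f x y) < ⊤) ∧ (∀ y, vp p (fun x => f x y) < ⊤) ∧
  vp p (fun x => (vp p (fun y => f x y)).toReal) < ⊤ ∧
  vp p (fun y => (vp p (fun x => f x y)).toReal) < ⊤

/-- `W_p(f) = v_p(φ_p[f]) + v_p(ψ_p[f])`, where `φ_p[f](x) = v_p(f_x)` and
`ψ_p[f](y) = v_p(f_y)`. -/
noncomputable def Wp (p : ℝ) (f : ℝ → ℝ → ℝ) : ℝ≥0∞ :=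
  vp p (fun x => (vp p (fun y => f x y)).toReal)
    + vp p (fun y => (vp p (fun x => f x y)).toReal)

/-- Membership in `L^p_0([0,1]^2)`: membership in `L^p([0,1]^2)` together with
vanishing of the linear mean values `∫₀¹ f(x,t) dt` and `∫₀¹ f(t,y) dt` for a.e.
`x` resp. `y`. -/
def MemLp20 (p : ℝ) (f : ℝ → ℝ → ℝ) : Prop :=
  MemLp2 p f ∧ (∀ᵐ x : ℝ ∂volume, ∫ t in (0:ℝ)..1, f x t = 0) ∧
    (∀ᵐ y : ℝ ∂volume, ∫ t in (0:ℝ)..1, f t y = 0)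

/-- `T` is a trigonometric polynomial of degree `(n,m)` in two variables. -/
def IsTrigPoly2 (n m : ℕ) (T : ℝ → ℝ → ℝ) : Prop :=
  ∃ a b c d : ℕ → ℕ → ℝ, ∀ x y : ℝ,
    T x y = ∑ j ∈ Finset.range (n + 1), ∑ k ∈ Finset.range (m + 1),
      (a j k * Real.cos (2 * Real.pi * j * x) * Real.cos (2 * Real.pi * k * y)
        + b j k * Real.cos (2 * Real.pi * j * x) * Real.sin (2 * Real.pi * k * y)
        + c j k * Real.sin (2 * Real.pi * j * x) * Real.cos (2 * Real.pi * k * y)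
        + d j k * Real.sin (2 * Real.pi * j * x) * Real.sin (2 * Real.pi * k * y))

end

/-!
The difference `T(x + s) - T(x)` of a one-variable trigonometric polynomial of degree `n` is, for
`n s < 1/2`, a combination of translates of `T` whose coefficients have absolute sum
`2 sin (π n s)` (an interpolation formula in the spirit of M. Riesz). Since the `L^p` norm is
translation invariant, differencing in `x` costs at most the factor `min 2 (2 π n s)`. Applying this
in each variable gives `ω(T; u, v)_p ≤ min 2 (2 π n u) * min 2 (2 π m v) * ‖T‖_p`, and the integrals
of these factors against `t ^ (-1/p) dt/t` are explicit.
-/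

section RieszInterpolation

open Real

/-- The nodes `(2k + 1)π / (2n)`, `k < 2n`, of Riesz interpolation: the zeros of `cos (n t)` in
`[0, 2π]`. -/
noncomputable def rieszNode (n k : ℕ) : ℝ := (2 * k + 1) * π / (2 * n)

/-- The weights of the quadrature at the nodes `rieszNode n k` that, for `0 ≤ n a < π / 2`, sends
`sin (j t)` to `sin (j a)` and `cos (j t)` to `0` for all `j ≤ n`. -/
noncomputable def rieszWeight (n : ℕ) (a : ℝ) (k : ℕ) : ℝ :=
  (-1) ^ k * (cos (n * a) * sin a / (2 * n)) / (cos a - cos (rieszNode n k))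

/-- The value at `sin (j t)` of the quadrature with weights `rieszWeight n a k`. -/
noncomputable def rieszSineMoment (n : ℕ) (a : ℝ) (j : ℕ) : ℝ :=
  ∑ k ∈ Finset.range (2 * n), rieszWeight n a k * sin (j * rieszNode n k)

lemma two_mul_cos_mul_sum_neg_one_pow_mul_sin (θ : ℝ) (N : ℕ) :
    2 * cos θ * ∑ k ∈ Finset.range N, (-1) ^ k * sin ((2 * k + 1) * θ) =
      -(-1) ^ N * sin (2 * N * θ) := by
  induction N with
  | zero => simp
  | succ N ih =>
    have sin_succ : sin (2 * (N + 1 : ℕ) * θ) = sin ((2 * N + 1) * θ + θ) := by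
      push_cast; ring_nf
    have sin_self : sin (2 * N * θ) = sin ((2 * N + 1) * θ - θ) := by ring_nf
    rw [Finset.sum_range_succ, mul_add, ih, sin_succ, sin_self, sin_add, sin_sub, pow_succ]
    ring

lemma sin_mul_eq_of_chebyshev_recurrence {U : ℕ → ℝ} {a : ℝ} {n : ℕ} (h₀ : U 0 = 0)
    (hU : ∀ j, j + 1 < n → U (j + 2) = 2 * cos a * U (j + 1) - U j) {j : ℕ} (hj : j ≤ n) :
    sin a * U j = U 1 * sin (j * a) := by
  induction j using Nat.twoStepInduction with
  | zero => simp [h₀]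
  | one => simp [mul_comm]
  | more j ih₀ ih₁ =>
    have sin_add_two : sin ((j + 2 : ℕ) * a) = 2 * cos a * sin ((j + 1 : ℕ) * a) - sin (j * a) := by
      rw [show ((j + 2 : ℕ) : ℝ) * a = (j + 1 : ℕ) * a + a by push_cast; ring,
        show (j : ℝ) * a = (j + 1 : ℕ) * a - a by push_cast; ring, sin_add, sin_sub]
      ring
    rw [hU j (by omega), sin_add_two]
    linear_combination 2 * cos a * ih₁ (by omega) - ih₀ (by omega)

section Nodes

variable {n : ℕ}

lemma natCast_mul_rieszNode (hn : n ≠ 0) (k : ℕ) : n * rieszNode n k = k * π + π / 2 := by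
  unfold rieszNode
  field_simp

lemma sin_natCast_mul_rieszNode (hn : n ≠ 0) (k : ℕ) : sin (n * rieszNode n k) = (-1) ^ k := by
  rw [natCast_mul_rieszNode hn, sin_add_pi_div_two, cos_nat_mul_pi]

lemma cos_natCast_mul_rieszNode (hn : n ≠ 0) (k : ℕ) : cos (n * rieszNode n k) = 0 := by
  rw [natCast_mul_rieszNode hn, cos_add_pi_div_two, sin_nat_mul_pi, neg_zero]

lemma rieszNode_reflect {k : ℕ} (hk : k < 2 * n) :
    rieszNode n (2 * n - 1 - k) = 2 * π - rieszNode n k := by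
  have hn : (n : ℝ) ≠ 0 := Nat.cast_ne_zero.2 (by omega)
  unfold rieszNode
  rw [Nat.sub_sub, Nat.cast_sub (by omega)]
  push_cast
  field_simp
  ring

lemma lt_rieszNode {a : ℝ} {k : ℕ} (hk : k < 2 * n) (hna : n * a < π / 2) :
    a < rieszNode n k := by
  have hn : (0 : ℝ) < n := Nat.cast_pos.2 (by omega)
  refine lt_of_mul_lt_mul_left ?_ hn.le
  rw [natCast_mul_rieszNode (by omega)]
  have : 0 ≤ k * π := by positivity
  linarith

lemma cos_rieszNode_lt_cos {a : ℝ} (ha : 0 ≤ a) (hna : n * a < π / 2) {k : ℕ} (hk : k < 2 * n) :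
    cos (rieszNode n k) < cos a := by
  have hlt : a < rieszNode n k := lt_rieszNode hk hna
  have hlt' : a < 2 * π - rieszNode n k :=
    rieszNode_reflect hk ▸ lt_rieszNode (by omega) hna
  rcases le_total (rieszNode n k) π with hle | hle
  · exact cos_lt_cos_of_nonneg_of_le_pi ha hle hlt
  · rw [← cos_two_pi_sub]
    exact cos_lt_cos_of_nonneg_of_le_pi ha (by linarith) hlt'

lemma sum_neg_one_pow_mul_sin_rieszNode {j : ℕ} (hj : j < n) :
    ∑ k ∈ Finset.range (2 * n), (-1) ^ k * sin (j * rieszNode n k) = 0 := by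
  have hn : (0 : ℝ) < n := Nat.cast_pos.2 (by omega)
  set θ : ℝ := j * π / (2 * n) with hθ
  have node_eq (k : ℕ) : j * rieszNode n k = (2 * k + 1) * θ := by
    rw [rieszNode, hθ]; ring
  have cos_pos : 0 < cos θ := by
    have hθ_nonneg : 0 ≤ θ := by positivity
    refine cos_pos_of_mem_Ioo ⟨by linarith [pi_pos], ?_⟩
    calc θ < n * π / (2 * n) := by rw [hθ]; gcongr
      _ = π / 2 := by field_simp
  have sin_end : sin (2 * (2 * n : ℕ) * θ) = 0 := by
    rw [← sin_nat_mul_pi (2 * j), hθ]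
    congr 1
    push_cast
    field_simp
  have telescoped := two_mul_cos_mul_sum_neg_one_pow_mul_sin θ (2 * n)
  rw [sin_end, mul_zero] at telescoped
  simp only [node_eq]
  exact (mul_eq_zero.1 telescoped).resolve_left (by positivity)

end Nodes

section Weights

variable {n : ℕ} {a : ℝ}

lemma rieszWeight_mul_cos_sub_cos (ha : 0 ≤ a) (hna : n * a < π / 2) {k : ℕ} (hk : k < 2 * n) :
    rieszWeight n a k * (cos a - cos (rieszNode n k)) =
      (-1) ^ k * (cos (n * a) * sin a / (2 * n)) :=
  div_mul_cancel₀ _ (sub_pos.2 (cos_rieszNode_lt_cos ha hna hk)).ne'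

lemma rieszWeight_reflect {k : ℕ} (hk : k < 2 * n) :
    rieszWeight n a (2 * n - 1 - k) = -rieszWeight n a k := by
  have neg_one_pow_reflect : (-1 : ℝ) ^ (2 * n - 1 - k) = -(-1) ^ k := by
    rw [neg_eq_neg_one_mul ((-1 : ℝ) ^ k), ← pow_succ']
    exact neg_one_pow_congr (by grind)
  rw [rieszWeight, rieszWeight, rieszNode_reflect hk, cos_two_pi_sub, neg_one_pow_reflect]
  ring

lemma sum_rieszWeight_mul_cos (n : ℕ) (a : ℝ) (j : ℕ) :
    ∑ k ∈ Finset.range (2 * n), rieszWeight n a k * cos (j * rieszNode n k) = 0 := by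
  have odd_reflect : ∀ k ∈ Finset.range (2 * n),
      rieszWeight n a (2 * n - 1 - k) * cos (j * rieszNode n (2 * n - 1 - k)) =
        -(rieszWeight n a k * cos (j * rieszNode n k)) := by
    intro k hk
    have hk := Finset.mem_range.1 hk
    rw [rieszWeight_reflect hk, rieszNode_reflect hk, mul_sub, cos_nat_mul_two_pi_sub, neg_mul]
  have sum_eq_neg := Finset.sum_range_reflect
    (fun k ↦ rieszWeight n a k * cos (j * rieszNode n k)) (2 * n)
  rw [Finset.sum_congr rfl odd_reflect, Finset.sum_neg_distrib] at sum_eq_neg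
  linarith

lemma rieszSineMoment_add_two (ha : 0 ≤ a) (hna : n * a < π / 2) {j : ℕ} (hj : j + 1 < n) :
    rieszSineMoment n a (j + 2) =
      2 * cos a * rieszSineMoment n a (j + 1) - rieszSineMoment n a j := by
  suffices h : rieszSineMoment n a (j + 2) + rieszSineMoment n a j
      - 2 * cos a * rieszSineMoment n a (j + 1) =
      -(2 * (cos (n * a) * sin a / (2 * n))) *
        ∑ k ∈ Finset.range (2 * n), (-1) ^ k * sin ((j + 1 : ℕ) * rieszNode n k) by
    rw [sum_neg_one_pow_mul_sin_rieszNode hj] at h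
    linarith
  simp only [rieszSineMoment, Finset.mul_sum]
  rw [← Finset.sum_add_distrib, ← Finset.sum_sub_distrib]
  refine Finset.sum_congr rfl fun k hk ↦ ?_
  rw [show ((j + 2 : ℕ) : ℝ) * rieszNode n k = (j + 1 : ℕ) * rieszNode n k + rieszNode n k by
      push_cast; ring,
    show (j : ℝ) * rieszNode n k = (j + 1 : ℕ) * rieszNode n k - rieszNode n k by push_cast; ring,
    sin_add, sin_sub]
  linear_combination -2 * sin ((j + 1 : ℕ) * rieszNode n k) *
    rieszWeight_mul_cos_sub_cos ha hna (Finset.mem_range.1 hk)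

lemma cos_mul_rieszSineMoment_sub {N : ℕ} (ha : 0 ≤ a) (hna : (N + 1 : ℕ) * a < π / 2) :
    cos a * rieszSineMoment (N + 1) a (N + 1) - rieszSineMoment (N + 1) a N =
      cos ((N + 1 : ℕ) * a) * sin a := by
  have summand_eq : ∀ k ∈ Finset.range (2 * (N + 1)),
      cos a * (rieszWeight (N + 1) a k * sin ((N + 1 : ℕ) * rieszNode (N + 1) k)) -
        rieszWeight (N + 1) a k * sin (N * rieszNode (N + 1) k) =
      cos ((N + 1 : ℕ) * a) * sin a / (2 * (N + 1 : ℕ)) := by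
    intro k hk
    have sq_eq_one : ((-1 : ℝ) ^ k) * (-1) ^ k = 1 := by simp [← mul_pow]
    rw [show (N : ℝ) * rieszNode (N + 1) k =
        (N + 1 : ℕ) * rieszNode (N + 1) k - rieszNode (N + 1) k by push_cast; ring,
      sin_sub, sin_natCast_mul_rieszNode N.succ_ne_zero, cos_natCast_mul_rieszNode N.succ_ne_zero]
    linear_combination (-1) ^ k * rieszWeight_mul_cos_sub_cos ha hna (Finset.mem_range.1 hk) +
      cos ((N + 1 : ℕ) * a) * sin a / (2 * (N + 1 : ℕ)) * sq_eq_one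
  rw [rieszSineMoment, rieszSineMoment, Finset.mul_sum, ← Finset.sum_sub_distrib,
    Finset.sum_congr rfl summand_eq, Finset.sum_const, Finset.card_range, nsmul_eq_mul]
  push_cast
  field_simp

/- Both sides vanish at `j = 0` and satisfy the Chebyshev recurrence for `j < n`, hence are
proportional; the relation between the moments of orders `n - 1` and `n` fixes the ratio. -/
theorem rieszSineMoment_eq_sin (ha : 0 ≤ a) (hna : n * a < π / 2) {j : ℕ} (hj : j ≤ n) :
    rieszSineMoment n a j = sin (j * a) := by
  rcases ha.eq_or_lt with rfl | ha_pos
  · simp [rieszSineMoment, rieszWeight]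
  rcases n with _ | N
  · simp [rieszSineMoment, Nat.le_zero.1 hj]
  have one_le : (1 : ℝ) ≤ (N + 1 : ℕ) := by simp
  have sin_pos : 0 < sin a := sin_pos_of_pos_of_lt_pi ha_pos (by nlinarith [pi_pos])
  have cos_pos : 0 < cos ((N + 1 : ℕ) * a) :=
    cos_pos_of_mem_Ioo ⟨by nlinarith [pi_pos], hna⟩
  have proportional {i : ℕ} (hi : i ≤ N + 1) :
      sin a * rieszSineMoment (N + 1) a i = rieszSineMoment (N + 1) a 1 * sin (i * a) :=
    sin_mul_eq_of_chebyshev_recurrence (by simp [rieszSineMoment])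
      (fun _ ↦ rieszSineMoment_add_two ha hna) hi
  have first_moment : rieszSineMoment (N + 1) a 1 = sin a := by
    have boundary := cos_mul_rieszSineMoment_sub ha hna
    have sin_pred : sin (N * a) =
        sin ((N + 1 : ℕ) * a) * cos a - cos ((N + 1 : ℕ) * a) * sin a := by
      rw [← sin_sub]; push_cast; ring_nf
    have top := proportional le_rfl
    have pred := proportional N.le_succ
    rw [sin_pred] at pred
    refine mul_right_cancel₀ (mul_pos cos_pos sin_pos).ne' ?_
    linear_combination sin a * boundary - cos a * top + pred
  refine mul_left_cancel₀ sin_pos.ne' ?_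
  rw [proportional hj, first_moment]

theorem sum_abs_rieszWeight (ha : 0 ≤ a) (hna : n * a < π / 2) :
    ∑ k ∈ Finset.range (2 * n), |rieszWeight n a k| = sin (n * a) := by
  rw [← rieszSineMoment_eq_sin ha hna le_rfl]
  refine Finset.sum_congr rfl fun k hk ↦ ?_
  have hk := Finset.mem_range.1 hk
  have one_le : (1 : ℝ) ≤ n := Nat.one_le_cast.2 (by omega)
  have sin_nonneg : 0 ≤ sin a := sin_nonneg_of_nonneg_of_le_pi ha (by nlinarith [pi_pos])
  have cos_nonneg : 0 ≤ cos (n * a) := cos_nonneg_of_mem_Icc ⟨by nlinarith [pi_pos], hna.le⟩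
  have denom_pos := sub_pos.2 (cos_rieszNode_lt_cos ha hna hk)
  have numer_nonneg : 0 ≤ cos (n * a) * sin a / (2 * n) := by positivity
  rw [sin_natCast_mul_rieszNode (by omega), rieszWeight, abs_div, abs_mul, abs_neg_one_pow,
    abs_of_pos denom_pos, abs_of_nonneg numer_nonneg]
  have sq_eq_one : ((-1 : ℝ) ^ k) * (-1) ^ k = 1 := by simp [← mul_pow]
  linear_combination -(cos (n * a) * sin a / (2 * n)) / (cos a - cos (rieszNode n k)) * sq_eq_one

theorem sum_rieszWeight_mul_cos_add (ha : 0 ≤ a) (hna : n * a < π / 2) {j : ℕ} (hj : j ≤ n)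
    (θ : ℝ) :
    ∑ k ∈ Finset.range (2 * n), rieszWeight n a k * cos (θ + j * rieszNode n k) =
      -sin θ * sin (j * a) := by
  simp only [cos_add, mul_sub, mul_left_comm _ (cos θ), mul_left_comm _ (sin θ)]
  rw [Finset.sum_sub_distrib, ← Finset.mul_sum, ← Finset.mul_sum, sum_rieszWeight_mul_cos,
    ← rieszSineMoment_eq_sin ha hna hj, rieszSineMoment]
  ring

theorem sum_rieszWeight_mul_sin_add (ha : 0 ≤ a) (hna : n * a < π / 2) {j : ℕ} (hj : j ≤ n)
    (θ : ℝ) :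
    ∑ k ∈ Finset.range (2 * n), rieszWeight n a k * sin (θ + j * rieszNode n k) =
      cos θ * sin (j * a) := by
  simpa [sub_add_eq_add_sub, cos_sub_pi_div_two, sin_sub_pi_div_two] using
    sum_rieszWeight_mul_cos_add ha hna hj (θ - π / 2)

end Weights

end RieszInterpolation

section TrigPoly

open Real
open scoped fwdDiff

variable {E F : Type*} [AddCommGroup E] [Module ℝ E] [AddCommGroup F] [Module ℝ F]
  {n m : ℕ} {f : ℝ → E}

/-- `f` is a 1-periodic trigonometric polynomial of degree at most `n` with coefficients in the real
vector space `E`. With `E = ℝ → ℝ` this describes a function of two variables that is a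
trigonometric polynomial in the first one. -/
def IsTrigPoly (n : ℕ) (f : ℝ → E) : Prop :=
  ∃ a b : ℕ → E, ∀ x, f x = ∑ j ∈ Finset.range (n + 1),
    (cos (2 * π * j * x) • a j + sin (2 * π * j * x) • b j)

namespace IsTrigPoly

lemma map (hf : IsTrigPoly n f) (L : E →ₗ[ℝ] F) : IsTrigPoly n fun x ↦ L (f x) := by
  obtain ⟨a, b, hab⟩ := hf
  exact ⟨fun j ↦ L (a j), fun j ↦ L (b j), fun x ↦ by simp [hab]⟩

lemma periodic (hf : IsTrigPoly n f) : Function.Periodic f 1 := by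
  obtain ⟨a, b, hab⟩ := hf
  intro x
  have angle_add (j : ℕ) : 2 * π * j * (x + 1) = 2 * π * j * x + j * (2 * π) := by ring
  simp only [hab, angle_add, cos_add_nat_mul_two_pi, sin_add_nat_mul_two_pi]

theorem fwdDiff_eq_sum_rieszWeight (hf : IsTrigPoly n f) {s : ℝ} (hs : 0 ≤ s)
    (hns : n * (π * s) < π / 2) :
    Δ_[s] f = ∑ k ∈ Finset.range (2 * n), (2 * rieszWeight n (π * s) k) •
      fun x ↦ f (x + (s / 2 + rieszNode n k / (2 * π))) := by
  obtain ⟨a, b, hab⟩ := hf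
  ext x
  simp only [fwdDiff, Finset.sum_apply, Pi.smul_apply, hab, Finset.smul_sum]
  rw [Finset.sum_comm, ← Finset.sum_sub_distrib]
  refine Finset.sum_congr rfl fun j hj ↦ ?_
  have hj : j ≤ n := Nat.lt_succ_iff.1 (Finset.mem_range.1 hj)
  have hπs : 0 ≤ π * s := by positivity
  set θ : ℝ := 2 * π * j * (x + s / 2) with hθ
  have angle_right : 2 * π * j * (x + s) = θ + j * (π * s) := by rw [hθ]; ring
  have angle_left : 2 * π * j * x = θ - j * (π * s) := by rw [hθ]; ring
  have angle_node (k : ℕ) :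
      2 * π * j * (x + (s / 2 + rieszNode n k / (2 * π))) = θ + j * rieszNode n k := by
    rw [hθ]; field_simp; ring
  simp only [angle_right, angle_left, angle_node, smul_add, smul_smul,
    mul_assoc 2 (rieszWeight _ _ _), Finset.sum_add_distrib, ← Finset.sum_smul, ← Finset.mul_sum,
    sum_rieszWeight_mul_cos_add hπs hns hj, sum_rieszWeight_mul_sin_add hπs hns hj]
  rw [cos_add, cos_sub, sin_add, sin_sub]
  module

end IsTrigPoly

namespace IsTrigPoly2

variable {T : ℝ → ℝ → ℝ}

protected lemma flip (hT : IsTrigPoly2 n m T) : IsTrigPoly2 m n (flip T) := by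
  obtain ⟨a, b, c, d, hT⟩ := hT
  refine ⟨fun k j ↦ a j k, fun k j ↦ c j k, fun k j ↦ b j k, fun k j ↦ d j k, fun y x ↦ ?_⟩
  rw [_root_.flip, hT, Finset.sum_comm]
  exact Finset.sum_congr rfl fun k _ ↦ Finset.sum_congr rfl fun j _ ↦ by ring

lemma isTrigPoly (hT : IsTrigPoly2 n m T) : IsTrigPoly n T := by
  obtain ⟨a, b, c, d, hT⟩ := hT
  refine ⟨fun j y ↦ ∑ k ∈ Finset.range (m + 1),
      (a j k * cos (2 * π * k * y) + b j k * sin (2 * π * k * y)),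
    fun j y ↦ ∑ k ∈ Finset.range (m + 1),
      (c j k * cos (2 * π * k * y) + d j k * sin (2 * π * k * y)), fun x ↦ ?_⟩
  ext y
  simp only [hT, Finset.sum_apply, Pi.add_apply, Pi.smul_apply, smul_eq_mul, Finset.mul_sum,
    ← Finset.sum_add_distrib]
  exact Finset.sum_congr rfl fun j _ ↦ Finset.sum_congr rfl fun k _ ↦ by ring

lemma measurable_uncurry (hT : IsTrigPoly2 n m T) : Measurable (Function.uncurry T) := by
  obtain ⟨a, b, c, d, hT⟩ := hT
  simp only [Function.uncurry_def, hT]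
  fun_prop

end IsTrigPoly2

end TrigPoly

section LpNorm

open scoped fwdDiff

lemma setLIntegral_Ioc_comp_add_right_of_periodic {g : ℝ → ℝ≥0∞} {c : ℝ} (hc : 0 < c)
    (hg : Function.Periodic g c) (h : ℝ) :
    ∫⁻ x in Ioc 0 c, g (x + h) = ∫⁻ x in Ioc 0 c, g x := by
  have : Fact (0 < c) := ⟨hc⟩
  have eq_circle (t : ℝ) : ∫⁻ x in Ioc t (t + c), g x = ∫⁻ z : AddCircle c, hg.lift z :=
    AddCircle.lintegral_preimage c t hg.lift
  calc ∫⁻ x in Ioc 0 c, g (x + h) = ∫⁻ x in Ioc h (h + c), g x := by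
        rw [← (measurePreserving_add_right volume h).setLIntegral_comp_preimage_emb
          (measurableEmbedding_addRight h) g (Ioc h (h + c)), preimage_add_const_Ioc, sub_self,
          add_sub_cancel_left]
    _ = ∫⁻ x in Ioc 0 c, g x := by
        rw [eq_circle, ← eq_circle 0, zero_add]

variable {p : ℝ} {f : ℝ → ℝ → ℝ}

lemma lpNorm2_comp_add (hf : Function.Periodic f 1) (h : ℝ) :
    lpNorm2 p (fun x ↦ f (x + h)) = lpNorm2 p f := by
  simp only [lpNorm2, ← restrict_Ioc_eq_restrict_Icc]
  congr 1
  exact setLIntegral_Ioc_comp_add_right_of_periodic one_pos (hf.comp fun g ↦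
    ∫⁻ y in Ioc 0 1, ENNReal.ofReal (|g y| ^ p)) h

lemma lpNorm2_flip (hf : Measurable (Function.uncurry f)) :
    lpNorm2 p (flip f) = lpNorm2 p f := by
  unfold lpNorm2
  congr 1
  refine lintegral_lintegral_swap (f := fun x y ↦ ENNReal.ofReal (|f y x| ^ p)) ?_
  exact ((hf.comp measurable_swap).abs.pow_const p).ennreal_ofReal.aemeasurable

lemma lpNorm2_eq_eLpNorm (hp : 0 < p) (hf : Measurable (Function.uncurry f)) :
    lpNorm2 p f = eLpNorm (Function.uncurry f) (ENNReal.ofReal p)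
      ((volume.restrict (Icc 0 1)).prod (volume.restrict (Icc 0 1))) := by
  rw [eLpNorm_eq_lintegral_rpow_enorm_toReal (by simpa using hp) ENNReal.ofReal_ne_top,
    ENNReal.toReal_ofReal hp.le, lintegral_prod _ (hf.enorm.pow_const p).aemeasurable, lpNorm2]
  simp only [Function.uncurry_apply_pair, Real.enorm_eq_ofReal_abs,
    ENNReal.ofReal_rpow_of_nonneg (abs_nonneg _) hp.le]

lemma measurable_uncurry_comp_add (hf : Measurable (Function.uncurry f)) (h : ℝ) :
    Measurable (Function.uncurry fun x ↦ f (x + h)) :=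
  hf.comp (g := Function.uncurry f) (f := fun z : ℝ × ℝ ↦ (z.1 + h, z.2)) (by fun_prop)

theorem lpNorm2_sum_smul_comp_add_le {ι : Type*} (hp : 1 ≤ p)
    (hf : Measurable (Function.uncurry f)) (hper : Function.Periodic f 1) (S : Finset ι)
    (c h : ι → ℝ) :
    lpNorm2 p (∑ k ∈ S, c k • fun x ↦ f (x + h k)) ≤
      ENNReal.ofReal (∑ k ∈ S, |c k|) * lpNorm2 p f := by
  have hp₀ : 0 < p := by linarith
  have translate_meas (k : ι) := measurable_uncurry_comp_add hf (h k)
  have uncurry_sum : Function.uncurry (∑ k ∈ S, c k • fun x ↦ f (x + h k)) =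
      ∑ k ∈ S, c k • Function.uncurry (fun x ↦ f (x + h k)) := by
    ext z
    simp [Function.uncurry_def]
  have sum_meas : Measurable (Function.uncurry (∑ k ∈ S, c k • fun x ↦ f (x + h k))) := by
    simp only [uncurry_sum]
    fun_prop
  rw [lpNorm2_eq_eLpNorm hp₀ sum_meas, uncurry_sum,
    ENNReal.ofReal_sum_of_nonneg fun _ _ ↦ abs_nonneg _, Finset.sum_mul]
  refine (eLpNorm_sum_le (fun k _ ↦ ((translate_meas k).const_smul (c k)).aestronglyMeasurable)
    (by simpa using hp)).trans (Finset.sum_le_sum fun k _ ↦ ?_)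
  rw [eLpNorm_const_smul, ← lpNorm2_eq_eLpNorm hp₀ (translate_meas k), lpNorm2_comp_add hper,
    Real.enorm_eq_ofReal_abs]

lemma lpNorm2_fwdDiff_le_two_mul (hp : 1 ≤ p) (hf : Measurable (Function.uncurry f))
    (hper : Function.Periodic f 1) (s : ℝ) : lpNorm2 p (Δ_[s] f) ≤ 2 * lpNorm2 p f := by
  have combination : Δ_[s] f =
      ∑ k : Fin 2, (![1, -1] : Fin 2 → ℝ) k • fun x ↦ f (x + ![s, 0] k) := by
    ext x y
    simp [fwdDiff, sub_eq_add_neg]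
  have coefficients : ENNReal.ofReal (∑ k : Fin 2, |(![1, -1] : Fin 2 → ℝ) k|) = 2 := by
    norm_num
  rw [combination, ← coefficients]
  exact lpNorm2_sum_smul_comp_add_le hp hf hper Finset.univ ![1, -1] ![s, 0]

end LpNorm

section Bernstein

open Real
open scoped fwdDiff

variable {p : ℝ} {n m : ℕ}

/-- The bound for the relative size in `L^p` of the increment, with step `t`, of a 1-periodic
trigonometric polynomial of degree `N`. -/
noncomputable def incrementFactor (N t : ℝ) : ℝ≥0∞ := ENNReal.ofReal (min 2 (2 * π * N * t))

lemma incrementFactor_le_two (N t : ℝ) : incrementFactor N t ≤ 2 :=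
  ENNReal.ofReal_le_of_le_toReal (by simp)

lemma incrementFactor_mono {N s t : ℝ} (hN : 0 ≤ N) (hst : s ≤ t) :
    incrementFactor N s ≤ incrementFactor N t := by
  unfold incrementFactor
  gcongr

theorem IsTrigPoly.lpNorm2_fwdDiff_le {f : ℝ → ℝ → ℝ} (hp : 1 ≤ p) (hf : IsTrigPoly n f)
    (hmeas : Measurable (Function.uncurry f)) {s : ℝ} (hs : 0 ≤ s) :
    lpNorm2 p (Δ_[s] f) ≤ incrementFactor n s * lpNorm2 p f := by
  rcases le_total 2 (2 * π * n * s) with hlarge | hsmall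
  · rw [incrementFactor, min_eq_left hlarge, ENNReal.ofReal_ofNat]
    exact lpNorm2_fwdDiff_le_two_mul hp hmeas hf.periodic s
  have hns : n * (π * s) < π / 2 := by linarith [pi_gt_three]
  rw [hf.fwdDiff_eq_sum_rieszWeight hs hns, incrementFactor, min_eq_right hsmall]
  refine (lpNorm2_sum_smul_comp_add_le hp hmeas hf.periodic _ _ _).trans ?_
  gcongr
  calc ∑ k ∈ Finset.range (2 * n), |2 * rieszWeight n (π * s) k|
      = 2 * sin (n * (π * s)) := by
        simp only [abs_mul, Nat.abs_ofNat, ← Finset.mul_sum,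
          sum_abs_rieszWeight (by positivity : 0 ≤ π * s) hns]
    _ ≤ 2 * (n * (π * s)) := by gcongr; exact sin_le (by positivity)
    _ = 2 * π * n * s := by ring

theorem IsTrigPoly2.lpNorm2_fwdDiff_fwdDiff_le {T : ℝ → ℝ → ℝ} (hp : 1 ≤ p)
    (hT : IsTrigPoly2 n m T) {s t : ℝ} (hs : 0 ≤ s) (ht : 0 ≤ t) :
    lpNorm2 p (Δ_[s] fun x ↦ Δ_[t] (T x)) ≤
      incrementFactor n s * (incrementFactor m t * lpNorm2 p T) := by
  have hmeas := hT.measurable_uncurry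
  have diff_trigPoly : IsTrigPoly n fun x ↦ Δ_[t] (T x) :=
    hT.isTrigPoly.map (LinearMap.funLeft ℝ ℝ (· + t) - LinearMap.id)
  have diff_meas : Measurable (Function.uncurry fun x ↦ Δ_[t] (T x)) :=
    (hmeas.comp (f := fun z : ℝ × ℝ ↦ (z.1, z.2 + t)) (by fun_prop)).sub hmeas
  calc lpNorm2 p (Δ_[s] fun x ↦ Δ_[t] (T x))
      ≤ incrementFactor n s * lpNorm2 p (fun x ↦ Δ_[t] (T x)) :=
        diff_trigPoly.lpNorm2_fwdDiff_le hp diff_meas hs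
    _ = incrementFactor n s * lpNorm2 p (Δ_[t] (flip T)) := by
        rw [← lpNorm2_flip diff_meas]; rfl
    _ ≤ incrementFactor n s * (incrementFactor m t * lpNorm2 p (flip T)) := by
        gcongr
        exact hT.flip.isTrigPoly.lpNorm2_fwdDiff_le hp hT.flip.measurable_uncurry ht
    _ = incrementFactor n s * (incrementFactor m t * lpNorm2 p T) := by
        rw [lpNorm2_flip hmeas]

theorem IsTrigPoly2.mixedModulus_le {T : ℝ → ℝ → ℝ} (hp : 1 ≤ p) (hT : IsTrigPoly2 n m T)
    (u v : ℝ) :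
    mixedModulus p T u v ≤ incrementFactor n u * (incrementFactor m v * lpNorm2 p T) := by
  refine iSup₂_le fun s hs ↦ iSup₂_le fun t ht ↦ ?_
  have mixed_eq : (fun x y ↦ T (x + s) (y + t) - T (x + s) y - T x (y + t) + T x y) =
      Δ_[s] fun x ↦ Δ_[t] (T x) := by
    ext x y
    simp only [fwdDiff, Pi.sub_apply]
    ring
  rw [mixed_eq]
  refine (hT.lpNorm2_fwdDiff_fwdDiff_le hp hs.1 ht.1).trans ?_
  gcongr
  exacts [incrementFactor_mono n.cast_nonneg hs.2, incrementFactor_mono m.cast_nonneg ht.2]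

end Bernstein

section PowerIntegrals

open Real

lemma lintegral_Ioc_zero_rpow {r c : ℝ} (hr : -1 < r) (hc : 0 ≤ c) :
    ∫⁻ t in Ioc 0 c, ENNReal.ofReal (t ^ r) = ENNReal.ofReal (c ^ (r + 1) / (r + 1)) := by
  have integrable : IntegrableOn (fun t : ℝ ↦ t ^ r) (Ioc 0 c) :=
    (intervalIntegrable_iff_integrableOn_Ioc_of_le hc).1
      (intervalIntegral.intervalIntegrable_rpow' hr)
  rw [← ofReal_integral_eq_lintegral_ofReal integrable
      (ae_restrict_of_forall_mem measurableSet_Ioc fun t ht ↦ rpow_nonneg ht.1.le r),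
    ← intervalIntegral.integral_of_le hc, integral_rpow (.inl hr),
    zero_rpow (by linarith), sub_zero]

lemma lintegral_Ioi_rpow {r c : ℝ} (hr : r < -1) (hc : 0 < c) :
    ∫⁻ t in Ioi c, ENNReal.ofReal (t ^ r) = ENNReal.ofReal (-c ^ (r + 1) / (r + 1)) := by
  rw [← ofReal_integral_eq_lintegral_ofReal (integrableOn_Ioi_rpow_of_lt hr hc)
      (ae_restrict_of_forall_mem measurableSet_Ioi fun t ht ↦ rpow_nonneg (hc.trans ht).le r),
    integral_Ioi_rpow_of_lt hr hc]

lemma lintegral_Ioi_rpow_mul_min {θ A B : ℝ} (hθ₀ : 0 < θ) (hθ₁ : θ < 1) (hA : 0 < A)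
    (hB : 0 < B) :
    ∫⁻ t in Ioi 0, ENNReal.ofReal (t ^ (-θ) / t) * ENNReal.ofReal (min A (B * t)) =
      ENNReal.ofReal (A ^ (1 - θ) * B ^ θ / (θ * (1 - θ))) := by
  have hc : 0 < A / B := by positivity
  have near : ∫⁻ t in Ioc 0 (A / B), ENNReal.ofReal (t ^ (-θ) / t) * ENNReal.ofReal (min A (B * t))
      = ENNReal.ofReal (B * ((A / B) ^ (-θ + 1) / (-θ + 1))) := by
    rw [ENNReal.ofReal_mul hB.le, ← lintegral_Ioc_zero_rpow (by linarith) hc.le,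
      ← lintegral_const_mul _ (by fun_prop)]
    refine setLIntegral_congr_fun measurableSet_Ioc fun t ht ↦ ?_
    have ht₀ : 0 < t := ht.1
    have hBt : B * t ≤ A := by rw [mul_comm]; exact (le_div_iff₀ hB).1 ht.2
    simp only [min_eq_right hBt]
    rw [← ENNReal.ofReal_mul (by positivity), ← ENNReal.ofReal_mul hB.le]
    congr 1
    field_simp
  have far : ∫⁻ t in Ioi (A / B), ENNReal.ofReal (t ^ (-θ) / t) * ENNReal.ofReal (min A (B * t))
      = ENNReal.ofReal (A * (-(A / B) ^ (-θ - 1 + 1) / (-θ - 1 + 1))) := by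
    rw [ENNReal.ofReal_mul hA.le, ← lintegral_Ioi_rpow (by linarith) hc,
      ← lintegral_const_mul _ (by fun_prop)]
    refine setLIntegral_congr_fun measurableSet_Ioi fun t ht ↦ ?_
    have hAt : A ≤ B * t := by rw [mul_comm]; exact ((div_lt_iff₀ hB).1 ht).le
    simp only [min_eq_left hAt, rpow_sub_one (hc.trans ht).ne', mul_comm]
  have hθ₁' : 0 < 1 - θ := by linarith
  rw [← Ioc_union_Ioi_eq_Ioi hc.le,
    lintegral_union measurableSet_Ioi Ioc_disjoint_Ioi_same, near, far]
  rw [show -θ - 1 + 1 = -θ by ring, neg_div_neg_eq, show -θ + 1 = 1 - θ by ring,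
    ← ENNReal.ofReal_add (by positivity) (by positivity), div_rpow hA.le hB.le,
    div_rpow hA.le hB.le, rpow_sub hA, rpow_sub hB, rpow_neg hA.le, rpow_neg hB.le, rpow_one,
    rpow_one]
  congr 1
  field_simp
  ring

variable {p : ℝ}

lemma lintegral_mul_incrementFactor_le (hp : 1 < p) {N : ℝ} (hN : 0 ≤ N) :
    ∫⁻ t in Ioc 0 1, ENNReal.ofReal (t ^ (-(1 / p)) / t) * incrementFactor N t ≤
      ENNReal.ofReal (2 * π * (p * (p / (p - 1))) * N ^ (1 / p)) := by
  rcases hN.eq_or_lt with rfl | hN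
  · simp [incrementFactor]
  have hp₀ : 0 < p := by linarith
  have hp₁ : 0 < p - 1 := by linarith
  have inv_lt_one : 1 / p < 1 := (div_lt_one hp₀).2 hp
  have pi_rpow_le : π ^ (1 / p) ≤ π :=
    (rpow_le_rpow_of_exponent_le (by linarith [pi_gt_three]) inv_lt_one.le).trans_eq (rpow_one π)
  calc ∫⁻ t in Ioc 0 1, ENNReal.ofReal (t ^ (-(1 / p)) / t) * incrementFactor N t
      ≤ ∫⁻ t in Ioi 0, ENNReal.ofReal (t ^ (-(1 / p)) / t) * incrementFactor N t :=
        lintegral_mono_set Ioc_subset_Ioi_self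
    _ = ENNReal.ofReal (2 ^ (1 - 1 / p) * (2 * π * N) ^ (1 / p) / (1 / p * (1 - 1 / p))) :=
        lintegral_Ioi_rpow_mul_min (by positivity) inv_lt_one two_pos (by positivity)
    _ = ENNReal.ofReal (2 * π ^ (1 / p) * (p * (p / (p - 1))) * N ^ (1 / p)) := by
        rw [mul_rpow (by positivity) hN.le, mul_rpow two_pos.le pi_pos.le, rpow_sub two_pos,
          rpow_one]
        congr 1
        field_simp
    _ ≤ ENNReal.ofReal (2 * π * (p * (p / (p - 1))) * N ^ (1 / p)) := by gcongr

end PowerIntegrals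

namespace IsTrigPoly2

open Real

variable {p : ℝ} {n m : ℕ} {T : ℝ → ℝ → ℝ}

theorem Kp_le (hp : 1 < p) (hT : IsTrigPoly2 n m T) :
    Kp p T ≤ ENNReal.ofReal
      (4 * π * (p * (p / (p - 1))) * ((n : ℝ) ^ (1 / p) + (m : ℝ) ^ (1 / p))) * lpNorm2 p T := by
  have : 0 < p - 1 := by linarith
  have integrand_le (t : ℝ) :
      ENNReal.ofReal (t ^ (-(1 / p)) / t) * (mixedModulus p T t 1 + mixedModulus p T 1 t) ≤
      (ENNReal.ofReal (t ^ (-(1 / p)) / t) * incrementFactor n t +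
        ENNReal.ofReal (t ^ (-(1 / p)) / t) * incrementFactor m t) * (2 * lpNorm2 p T) := by
    calc _ ≤ ENNReal.ofReal (t ^ (-(1 / p)) / t) *
          (incrementFactor n t * (2 * lpNorm2 p T) +
            2 * (incrementFactor m t * lpNorm2 p T)) := by
          gcongr
          · exact (hT.mixedModulus_le hp.le t 1).trans (by gcongr; exact incrementFactor_le_two ..)
          · exact (hT.mixedModulus_le hp.le 1 t).trans (by gcongr; exact incrementFactor_le_two ..)
      _ = _ := by ring
  refine (lintegral_mono integrand_le).trans ?_
  rw [lintegral_mul_const _ (by unfold incrementFactor; fun_prop),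
    lintegral_add_left (by unfold incrementFactor; fun_prop)]
  refine (mul_le_mul_left (add_le_add (lintegral_mul_incrementFactor_le hp n.cast_nonneg)
    (lintegral_mul_incrementFactor_le hp m.cast_nonneg)) _).trans_eq ?_
  rw [← ENNReal.ofReal_add (by positivity) (by positivity), ← mul_assoc,
    ← ENNReal.ofReal_ofNat 2, ← ENNReal.ofReal_mul (by positivity)]
  ring_nf

theorem Ip_le (hp : 1 < p) (hT : IsTrigPoly2 n m T) :
    Ip p T ≤ ENNReal.ofReal
      (4 * π ^ 2 * (p * (p / (p - 1))) ^ 2 * ((n : ℝ) * m) ^ (1 / p)) * lpNorm2 p T := by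
  have : 0 < p - 1 := by linarith
  set weight : ℕ → ℝ → ℝ≥0∞ := fun N t ↦
    ENNReal.ofReal (t ^ (-(1 / p)) / t) * incrementFactor N t with weight_def
  have weight_meas (N : ℕ) : Measurable (weight N) := by
    simp only [weight_def, incrementFactor]
    fun_prop
  have integrand_le : ∀ u ∈ Ioc (0 : ℝ) 1, ∀ v ∈ Ioc (0 : ℝ) 1,
      ENNReal.ofReal ((u * v) ^ (-(1 / p)) / (u * v)) * mixedModulus p T u v ≤
        weight n u * (weight m v * lpNorm2 p T) := by
    intro u ⟨hu, _⟩ v ⟨hv, _⟩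
    have kernel_mul : (u * v) ^ (-(1 / p)) / (u * v) =
        u ^ (-(1 / p)) / u * (v ^ (-(1 / p)) / v) := by
      rw [mul_rpow hu.le hv.le, mul_div_mul_comm]
    rw [kernel_mul, ENNReal.ofReal_mul (by positivity)]
    exact (mul_le_mul_right (hT.mixedModulus_le hp.le u v) _).trans_eq (by ring)
  calc Ip p T
      ≤ ∫⁻ u in Ioc 0 1, ∫⁻ v in Ioc 0 1, weight n u * (weight m v * lpNorm2 p T) :=
        setLIntegral_mono' measurableSet_Ioc fun u hu ↦
          setLIntegral_mono' measurableSet_Ioc (integrand_le u hu)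
    _ = (∫⁻ u in Ioc 0 1, weight n u) * ((∫⁻ v in Ioc 0 1, weight m v) * lpNorm2 p T) := by
        simp only [lintegral_const_mul _ ((weight_meas m).mul_const _),
          lintegral_mul_const _ (weight_meas _)]
    _ ≤ ENNReal.ofReal (2 * π * (p * (p / (p - 1))) * (n : ℝ) ^ (1 / p)) *
          (ENNReal.ofReal (2 * π * (p * (p / (p - 1))) * (m : ℝ) ^ (1 / p)) * lpNorm2 p T) := by
        gcongr <;> exact lintegral_mul_incrementFactor_le hp (Nat.cast_nonneg _)
    _ = _ := by
        rw [← mul_assoc, ← ENNReal.ofReal_mul (by positivity),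
          mul_rpow n.cast_nonneg m.cast_nonneg]
        ring_nf

end IsTrigPoly2

/-- For `1 < p < ∞` and a trigonometric polynomial `T` of degree `(n,m)`:
`K_p(T) ≤ 12π² p p' (nm)^{1/p} ‖T‖_p` and `I_p(T) ≤ 8π² (pp')² (nm)^{1/p} ‖T‖_p`. -/
theorem statement14 (p : ℝ) (hp : 1 < p) (n m : ℕ) (hn : 1 ≤ n) (hm : 1 ≤ m)
    (T : ℝ → ℝ → ℝ) (hT : IsTrigPoly2 n m T) :
    Kp p T ≤ ENNReal.ofReal
        (12 * Real.pi ^ 2 * p * (p / (p - 1)) * ((n : ℝ) * m) ^ (1 / p)) * lpNorm2 p T ∧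
    Ip p T ≤ ENNReal.ofReal
        (8 * Real.pi ^ 2 * (p * (p / (p - 1))) ^ 2 * ((n : ℝ) * m) ^ (1 / p)) * lpNorm2 p T := by
  have : 0 < p := by linarith
  have : 0 < p - 1 := by linarith
  refine ⟨(hT.Kp_le hp).trans ?_, (hT.Ip_le hp).trans ?_⟩
  · gcongr ENNReal.ofReal ?_ * _
    rw [Real.mul_rpow n.cast_nonneg m.cast_nonneg]
    have one_le_n : 1 ≤ (n : ℝ) ^ (1 / p) :=
      Real.one_le_rpow (Nat.one_le_cast.2 hn) (by positivity)
    have one_le_m : 1 ≤ (m : ℝ) ^ (1 / p) :=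
      Real.one_le_rpow (Nat.one_le_cast.2 hm) (by positivity)
    calc 4 * Real.pi * (p * (p / (p - 1))) * ((n : ℝ) ^ (1 / p) + (m : ℝ) ^ (1 / p))
        ≤ 4 * Real.pi * (p * (p / (p - 1))) *
            (3 * Real.pi * ((n : ℝ) ^ (1 / p) * (m : ℝ) ^ (1 / p))) := by
          gcongr
          nlinarith [Real.pi_gt_three, mul_nonneg (sub_nonneg.2 one_le_n) (sub_nonneg.2 one_le_m),
            one_le_mul_of_one_le_of_one_le one_le_n one_le_m]
      _ = _ := by ring
  · gcongr
    norm_num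
end

section
/- There exist two functions f and g on ℝ², each 1-periodic in both variables, such that for every 1 ≤ p < ∞ both f and g belong to the mixed norm class V_p[V_p], but f + g does not belong to V_p[V_p] for any 1 ≤ p < ∞. In particular, V_p[V_p] is not a vector space. -/
open MeasureTheory Filter Set
open scoped ENNReal

/-!
For a permutation `σ` of the circle `ℝ/ℤ`, the indicator of the graph of `σ` belongs to `V_p[V_p]`
for every `p`: all its sections, in either variable, are indicators of a single point of the
circle, hence translates of one another, so that `φ_p` and `ψ_p` are finite constants. Take `f` to
be the indicator of the diagonal and `-g` the indicator of the graph of a permutation `σ` which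
fixes the rational points and moves the irrational ones. The section of `f + g` at `x` vanishes if
`x` is rational and otherwise jumps between `1` and `-1`. Thus `φ_p[f + g]` is `0` on a dense set
and at least `2` on another one, so its `p`-variation is infinite.
-/

section Variation

variable {p : ℝ} {g : ℝ → ℝ}

lemma ofReal_sum_le_vp {n : ℕ} {x : ℕ → ℝ} (hx : ∀ i < n, x i < x (i + 1)) (hn : x n = x 0 + 1) :
    ENNReal.ofReal ((∑ k ∈ Finset.range n, |g (x (k + 1)) - g (x k)| ^ p) ^ (1 / p)) ≤ vp p g :=
  le_iSup_of_le n <| le_iSup_of_le x <| le_iSup_of_le hx <| le_iSup_of_le hn le_rfl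

lemma ofReal_sum_le_vp_of_lt_add_one (hp : 0 ≤ p) {n : ℕ} {x : ℕ → ℝ}
    (hx : ∀ i < n, x i < x (i + 1)) (hn : x n < x 0 + 1) :
    ENNReal.ofReal ((∑ k ∈ Finset.range n, |g (x (k + 1)) - g (x k)| ^ p) ^ (1 / p)) ≤ vp p g := by
  set y : ℕ → ℝ := Function.update x (n + 1) (x 0 + 1)
  have y_eq_x : ∀ i ≤ n, y i = x i := fun i hi ↦ Function.update_of_ne (by lia) _ _
  have y_last : y (n + 1) = x 0 + 1 := Function.update_self ..
  have sum_eq : ∑ k ∈ Finset.range n, |g (y (k + 1)) - g (y k)| ^ p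
      = ∑ k ∈ Finset.range n, |g (x (k + 1)) - g (x k)| ^ p :=
    Finset.sum_congr rfl fun k hk ↦ by
      have hkn := Finset.mem_range.1 hk
      rw [y_eq_x k hkn.le, y_eq_x (k + 1) hkn]
  have y_lt : ∀ i < n + 1, y i < y (i + 1) := fun i hi ↦ by
    rcases Nat.lt_succ_iff_lt_or_eq.1 hi with hin | rfl
    · rw [y_eq_x i hin.le, y_eq_x (i + 1) hin]
      exact hx i hin
    · rwa [y_eq_x i le_rfl, y_last]
  have y_closed : y (n + 1) = y 0 + 1 := by rw [y_last, y_eq_x 0 n.zero_le]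
  refine le_trans ?_ (ofReal_sum_le_vp y_lt y_closed)
  rw [Finset.sum_range_succ, sum_eq]
  gcongr
  exact le_add_of_nonneg_right (by positivity)

lemma ofReal_abs_sub_le_vp (hp : 0 < p) {a b : ℝ} (hab : a < b) (hba : b < a + 1) :
    ENNReal.ofReal |g b - g a| ≤ vp p g := by
  have two_points := ofReal_sum_le_vp_of_lt_add_one (g := g) hp.le (n := 1)
    (x := fun i ↦ if i = 0 then a else b) (by simpa using hab) (by simpa using hba)
  simpa [Real.rpow_rpow_inv (abs_nonneg _) hp.ne'] using two_points

lemma vp_le_of_rpow_abs_sub_le_sub (hp : 0 ≤ p) {G : ℝ → ℝ} {C : ℝ}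
    (hG : ∀ a b, a < b → |g b - g a| ^ p ≤ G b - G a) (hC : ∀ t, G (t + 1) = G t + C) :
    vp p g ≤ ENNReal.ofReal (C ^ (1 / p)) := by
  refine iSup_le fun n ↦ iSup_le fun x ↦ iSup_le fun hx ↦ iSup_le fun hn ↦ ?_
  gcongr
  calc ∑ k ∈ Finset.range n, |g (x (k + 1)) - g (x k)| ^ p
      ≤ ∑ k ∈ Finset.range n, (G (x (k + 1)) - G (x k)) :=
        Finset.sum_le_sum fun k hk ↦ hG _ _ (hx k (Finset.mem_range.1 hk))
    _ = G (x n) - G (x 0) := Finset.sum_range_sub (G ∘ x) n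
    _ = C := by rw [hn, hC, add_sub_cancel_left]

lemma vp_const (hp : p ≠ 0) (c : ℝ) : vp p (fun _ ↦ c) = 0 := by
  simp [vp, Real.zero_rpow hp, Real.zero_rpow (inv_ne_zero hp)]

lemma vp_neg (p : ℝ) (g : ℝ → ℝ) : vp p (fun t ↦ -g t) = vp p g := by
  simp only [vp, neg_sub_neg, abs_sub_comm]

lemma vp_comp_sub_le (p : ℝ) (g : ℝ → ℝ) (a : ℝ) : vp p (fun t ↦ g (t - a)) ≤ vp p g :=
  iSup_le fun n ↦ iSup_le fun x ↦ iSup_le fun hx ↦ iSup_le fun hn ↦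
    ofReal_sum_le_vp (n := n) (x := fun i ↦ x i - a) (fun i hi ↦ sub_lt_sub_right (hx i hi) a)
      (by rw [hn]; ring)

lemma vp_comp_sub (p : ℝ) (g : ℝ → ℝ) (a : ℝ) : vp p (fun t ↦ g (t - a)) = vp p g :=
  le_antisymm (vp_comp_sub_le p g a) <| by
    simpa using vp_comp_sub_le p (fun t ↦ g (t - a)) (-a)

lemma exists_strictMono_alternating {A B : Set ℝ} (hA : Dense A) (hB : Dense B) (n : ℕ) :
    ∃ x : ℕ → ℝ, StrictMono x ∧ x n < x 0 + 1 ∧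
      ∀ k, x k ∈ A ∧ x (k + 1) ∈ B ∨ x k ∈ B ∧ x (k + 1) ∈ A := by
  set S : ℕ → Set ℝ := fun k ↦ if Even k then A else B
  have hS : ∀ k, Dense (S k) := fun k ↦ by by_cases hk : Even k <;> simpa [S, hk]
  have exists_mem : ∀ k : ℕ, ∃ t ∈ S k, (k : ℝ) / (n + 1) < t ∧ t < (k + 1 : ℝ) / (n + 1) :=
    fun k ↦ (hS k).exists_between (by gcongr; exact lt_add_one _)
  choose x x_mem lt_x x_lt using exists_mem
  refine ⟨x, strictMono_nat_of_lt_succ fun k ↦ ?_, ?_, fun k ↦ ?_⟩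
  · exact (x_lt k).trans (by exact_mod_cast lt_x (k + 1))
  · have x_zero_pos : 0 < x 0 := by simpa using lt_x 0
    have x_n_lt_one : x n < 1 := by simpa [(n.cast_add_one_pos (α := ℝ)).ne'] using x_lt n
    linarith
  · have hk := x_mem k
    have hk_succ := x_mem (k + 1)
    by_cases even_k : Even k <;> simp_all [S, Nat.even_add_one]

lemma vp_eq_top_of_dense_of_le_abs_sub (hp : 0 < p) {A B : Set ℝ} (hA : Dense A) (hB : Dense B)
    {c : ℝ} (hc : 0 < c) (hg : ∀ a ∈ A, ∀ b ∈ B, c ≤ |g b - g a|) : vp p g = ⊤ := by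
  have le_vp : ∀ n : ℕ, ENNReal.ofReal ((n * c ^ p) ^ (1 / p)) ≤ vp p g := fun n ↦ by
    obtain ⟨x, x_mono, x_lt, x_mem⟩ := exists_strictMono_alternating hA hB n
    have c_le : ∀ k, c ≤ |g (x (k + 1)) - g (x k)| := fun k ↦ by
      rcases x_mem k with ⟨hkA, hkB⟩ | ⟨hkB, hkA⟩
      · exact hg _ hkA _ hkB
      · rw [abs_sub_comm]
        exact hg _ hkA _ hkB
    refine le_trans ?_ (ofReal_sum_le_vp_of_lt_add_one hp.le (fun i _ ↦ x_mono i.lt_succ_self) x_lt)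
    gcongr
    calc n * c ^ p = ∑ _k ∈ Finset.range n, c ^ p := by simp
      _ ≤ ∑ k ∈ Finset.range n, |g (x (k + 1)) - g (x k)| ^ p := by
        gcongr with k
        exact c_le k
  have tendsto_top : Tendsto (fun n : ℕ ↦ ENNReal.ofReal ((n * c ^ p) ^ (1 / p))) atTop (nhds ⊤) :=
    ENNReal.tendsto_ofReal_atTop.comp <| (tendsto_rpow_atTop (one_div_pos.2 hp)).comp <|
      tendsto_natCast_atTop_atTop.atTop_mul_const (Real.rpow_pos_of_pos hc p)
  exact top_le_iff.1 (le_of_tendsto' tendsto_top le_vp)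

end Variation

section MixedNorm

variable {p : ℝ} {f : ℝ → ℝ → ℝ}

lemma memVpVp_of_vp_section_eq (hp : p ≠ 0) {C D : ℝ≥0∞} (hC : C < ⊤) (hD : D < ⊤)
    (hfC : ∀ x, vp p (fun y ↦ f x y) = C) (hfD : ∀ y, vp p (fun x ↦ f x y) = D) :
    MemVpVp p f := by
  simp [MemVpVp, hfC, hfD, vp_const hp, hC, hD]

lemma MemVpVp.neg (hf : MemVpVp p f) : MemVpVp p (fun x y ↦ -f x y) := by
  simpa only [MemVpVp, vp_neg] using hf

lemma BiPeriodic.neg (hf : BiPeriodic f) : BiPeriodic (fun x y ↦ -f x y) :=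
  ⟨fun x y ↦ congrArg Neg.neg (hf.1 x y), fun x y ↦ congrArg Neg.neg (hf.2 x y)⟩

end MixedNorm

section Spike

variable {p : ℝ}

/-- The indicator function of the point `c` of the circle `ℝ/ℤ`, as a 1-periodic function on
`ℝ`. -/
noncomputable def spike (c : UnitAddCircle) (t : ℝ) : ℝ :=
  indicator {c} 1 (t : UnitAddCircle)

lemma spike_of_coe_eq {c : UnitAddCircle} {t : ℝ} (h : (t : UnitAddCircle) = c) :
    spike c t = 1 := by
  simp [spike, h]

lemma spike_of_coe_ne {c : UnitAddCircle} {t : ℝ} (h : (t : UnitAddCircle) ≠ c) :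
    spike c t = 0 := by
  simp [spike, h]

lemma spike_add_one (c : UnitAddCircle) (t : ℝ) : spike c (t + 1) = spike c t := by
  rw [spike, AddCircle.coe_add_period, spike]

lemma spike_coe (a t : ℝ) : spike a t = spike 0 (t - a) := by
  simp only [spike, indicator, mem_singleton_iff, AddCircle.coe_sub, sub_eq_zero, Pi.one_apply]

lemma spike_zero (t : ℝ) : spike 0 t = ⌊t⌋ - ⌈t⌉ + 1 := by
  by_cases ht : t ∈ range ((↑) : ℤ → ℝ)
  · rw [spike_of_coe_eq (AddCircle.coe_eq_zero_iff 1 |>.2 (by simpa using ht))]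
    obtain ⟨n, rfl⟩ := ht
    simp
  · rw [spike_of_coe_ne fun h ↦ ht (by simpa using AddCircle.coe_eq_zero_iff 1 |>.1 h),
      (Int.ceil_eq_floor_add_one_iff_notMem t).2 ht]
    push_cast
    ring

lemma rpow_abs_spike_sub (hp : p ≠ 0) (c : UnitAddCircle) (a b : ℝ) :
    |spike c b - spike c a| ^ p = |spike c b - spike c a| := by
  by_cases ha : (a : UnitAddCircle) = c <;> by_cases hb : (b : UnitAddCircle) = c <;>
    simp [spike, ha, hb, Real.zero_rpow hp]

lemma abs_spike_zero_sub_le {a b : ℝ} (hab : a ≤ b) :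
    |spike 0 b - spike 0 a| ≤ ((⌊b⌋ : ℝ) + ⌈b⌉) - (⌊a⌋ + ⌈a⌉) := by
  have floor_le : (⌊a⌋ : ℝ) ≤ ⌊b⌋ := by exact_mod_cast Int.floor_mono hab
  have ceil_le : (⌈a⌉ : ℝ) ≤ ⌈b⌉ := by exact_mod_cast Int.ceil_mono hab
  rw [spike_zero, spike_zero, abs_le]
  constructor <;> linarith

lemma vp_spike_zero_lt_top (hp : 0 < p) : vp p (spike 0) < ⊤ := by
  refine (vp_le_of_rpow_abs_sub_le_sub (G := fun t ↦ ⌊t⌋ + ⌈t⌉) (C := 2) hp.le ?_ ?_).trans_lt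
    ENNReal.ofReal_lt_top
  · intro a b hab
    rw [rpow_abs_spike_sub hp.ne']
    exact abs_spike_zero_sub_le hab.le
  · intro t
    simp only [Int.floor_add_one, Int.ceil_add_one]
    push_cast
    ring

lemma vp_spike (p : ℝ) (c : UnitAddCircle) : vp p (spike c) = vp p (spike 0) := by
  obtain ⟨a, rfl⟩ := QuotientAddGroup.mk_surjective c
  rw [← vp_comp_sub p (spike 0) a]
  exact congrArg (vp p) (funext (spike_coe a))

lemma two_le_vp_spike_sub_spike (hp : 0 < p) {c d : UnitAddCircle} (hcd : c ≠ d) :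
    2 ≤ vp p (fun t ↦ spike c t - spike d t) := by
  obtain ⟨a, rfl⟩ := QuotientAddGroup.mk_surjective c
  obtain ⟨b, ⟨hab, hba⟩, rfl⟩ : d ∈ (↑) '' Ico a (a + 1) :=
    AddCircle.coe_image_Ico_eq 1 a ▸ mem_univ d
  have a_lt_b : a < b := hab.lt_of_ne fun h ↦ hcd (congrArg _ h)
  have jump := ofReal_abs_sub_le_vp (g := fun t ↦ spike a t - spike b t) hp a_lt_b hba
  rw [spike_of_coe_eq rfl, spike_of_coe_eq rfl, spike_of_coe_ne hcd, spike_of_coe_ne hcd.symm]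
    at jump
  norm_num at jump
  exact jump

end Spike

section GraphIndicator

variable {p : ℝ}

/-- The indicator function of the graph of a self-map `σ` of the circle `ℝ/ℤ`, as a biperiodic
function on `ℝ²`. -/
noncomputable def graphIndicator (σ : UnitAddCircle → UnitAddCircle) (x y : ℝ) : ℝ :=
  spike (σ x) y

lemma biPeriodic_graphIndicator (σ : UnitAddCircle → UnitAddCircle) :
    BiPeriodic (graphIndicator σ) :=
  ⟨fun x y ↦ by rw [graphIndicator, AddCircle.coe_add_period, graphIndicator],
    fun x y ↦ spike_add_one (σ x) y⟩

lemma graphIndicator_perm_eq_spike_symm (σ : Equiv.Perm UnitAddCircle) (x y : ℝ) :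
    graphIndicator σ x y = spike (σ.symm y) x := by
  simp only [graphIndicator, spike, indicator, mem_singleton_iff, Pi.one_apply,
    Equiv.eq_symm_apply, eq_comm (a := σ x)]

lemma memVpVp_graphIndicator_perm (hp : 0 < p) (σ : Equiv.Perm UnitAddCircle) :
    MemVpVp p (graphIndicator σ) := by
  refine memVpVp_of_vp_section_eq hp.ne' (vp_spike_zero_lt_top hp) (vp_spike_zero_lt_top hp)
    (fun x ↦ vp_spike p (σ x)) fun y ↦ ?_
  simp only [graphIndicator_perm_eq_spike_symm]
  exact vp_spike p (σ.symm y)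

lemma not_memVpVp_graphIndicator_id_add_neg (hp : 0 < p) {σ : UnitAddCircle → UnitAddCircle}
    (hfix : Dense {x : ℝ | σ x = x}) (hmove : Dense {x : ℝ | σ x ≠ x}) :
    ¬ MemVpVp p (fun x y ↦ graphIndicator id x y + -graphIndicator σ x y) := by
  rintro ⟨section_lt_top, -, vp_lt_top, -⟩
  simp only [graphIndicator, id, ← sub_eq_add_neg] at section_lt_top vp_lt_top
  refine vp_lt_top.ne (vp_eq_top_of_dense_of_le_abs_sub hp hfix hmove two_pos ?_)
  intro a ha b hb
  have vp_fixed : vp p (fun y ↦ spike a y - spike (σ a) y) = 0 := by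
    simp only [ha.out, sub_self, vp_const hp.ne']
  have vp_moved : 2 ≤ (vp p (fun y ↦ spike b y - spike (σ b) y)).toReal :=
    ENNReal.toReal_mono (section_lt_top b).ne (two_le_vp_spike_sub_spike hp hb.out.symm)
  rw [vp_fixed, ENNReal.toReal_zero, sub_zero]
  exact vp_moved.trans (le_abs_self _)

end GraphIndicator

section NegOffTorsion

open Classical in
/-- The permutation of an additive group which fixes the elements of finite order and negates all
the others. -/
noncomputable def negOffTorsion (G : Type*) [AddGroup G] : Equiv.Perm G :=
  Equiv.Perm.ofSubtype <| (Equiv.neg G).subtypePerm (p := fun u ↦ ¬ IsOfFinAddOrder u)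
    fun _ ↦ isOfFinAddOrder_neg_iff.not

lemma negOffTorsion_apply_eq_self_iff {G : Type*} [AddGroup G] {u : G} :
    negOffTorsion G u = u ↔ IsOfFinAddOrder u := by
  classical
  by_cases hu : IsOfFinAddOrder u
  · exact iff_of_true (Equiv.Perm.ofSubtype_apply_of_not_mem _ (not_not.2 hu)) hu
  · have apply_eq_neg : negOffTorsion G u = -u :=
      Equiv.Perm.ofSubtype_apply_of_mem (p := fun v ↦ ¬ IsOfFinAddOrder v) _ hu
    have two_nsmul_eq_zero : -u = u → 2 • u = 0 := fun h ↦ by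
      rw [two_nsmul, ← neg_eq_iff_add_eq_zero, h]
    rw [apply_eq_neg]
    exact iff_of_false (fun h ↦ hu (isOfFinAddOrder_iff_nsmul_eq_zero.2
      ⟨2, two_pos, two_nsmul_eq_zero h⟩)) hu

lemma isOfFinAddOrder_unitAddCircle_coe_iff {x : ℝ} :
    IsOfFinAddOrder (x : UnitAddCircle) ↔ ¬ Irrational x := by
  simp [AddCircle.isOfFinAddOrder_iff_exists_rat_eq_div, Irrational]

lemma dense_setOf_negOffTorsion_coe_eq :
    Dense {x : ℝ | negOffTorsion UnitAddCircle x = x} := by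
  simp only [negOffTorsion_apply_eq_self_iff, isOfFinAddOrder_unitAddCircle_coe_iff, Irrational,
    not_not]
  exact Rat.denseRange_cast

lemma dense_setOf_negOffTorsion_coe_ne :
    Dense {x : ℝ | negOffTorsion UnitAddCircle x ≠ x} := by
  simp only [ne_eq, negOffTorsion_apply_eq_self_iff, isOfFinAddOrder_unitAddCircle_coe_iff, not_not]
  exact dense_irrational

end NegOffTorsion

theorem statement15_general :
    ∃ f g : ℝ → ℝ → ℝ, BiPeriodic f ∧ BiPeriodic g ∧
      ∀ p : ℝ, 0 < p →
        MemVpVp p f ∧ MemVpVp p g ∧ ¬ MemVpVp p (fun x y => f x y + g x y) := by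
  set σ := negOffTorsion UnitAddCircle
  refine ⟨graphIndicator id, fun x y ↦ -graphIndicator σ x y, biPeriodic_graphIndicator id,
    (biPeriodic_graphIndicator σ).neg, fun p hp ↦ ⟨?_, ?_, ?_⟩⟩
  · exact memVpVp_graphIndicator_perm hp (Equiv.refl _)
  · exact (memVpVp_graphIndicator_perm hp σ).neg
  · exact not_memVpVp_graphIndicator_id_add_neg hp dense_setOf_negOffTorsion_coe_eq
      dense_setOf_negOffTorsion_coe_ne

/-- There exist biperiodic `f` and `g` such that for every `1 ≤ p < ∞`
both `f, g ∈ V_p[V_p]` but `f + g ∉ V_p[V_p]`; thus `V_p[V_p]` is not a vector space. -/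
theorem statement15 :
    ∃ f g : ℝ → ℝ → ℝ, BiPeriodic f ∧ BiPeriodic g ∧
      ∀ p : ℝ, 1 ≤ p →
        MemVpVp p f ∧ MemVpVp p g ∧ ¬ MemVpVp p (fun x y => f x y + g x y) := by
  obtain ⟨f, g, hf, hg, h⟩ := statement15_general
  exact ⟨f, g, hf, hg, fun p hp ↦ h p (one_pos.trans_le hp)⟩
end
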